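/- Echelon subgroups of free groups are compressed: if H is an echelon subgroup of the free group F_n of finite rank n and G is any subgroup with H ≤ G ≤ F_n, then rk(H) ≤ rk(G). -/

import Mathlib

/-- The rank of a subgroup: the minimal cardinality of a generating set.
For subgroups of free groups (which are free by Nielsen–Schreier) this is the
cardinality of a free basis. -/
noncomputable def rk {G : Type*} [Group G] (H : Subgroup G) : Cardinal :=
  ⨅ S : {S : Set G // Subgroup.closure S = H}, Cardinal.mk S.1

/-- A subgroup `H` is inert if `rk (H ⊓ K) ≤ rk K` for every finitely generated `K`. -/
def IsInert {G : Type*} [Group G] (H : Subgroup G) : Prop :=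
  ∀ K : Subgroup G, K.FG → rk (H ⊓ K) ≤ rk K

/-- `stage x i` is the subgroup generated by the first `i` elements of `x`. -/
def stage {n : ℕ} {F : Type*} [Group F] (x : Fin n → F) (i : ℕ) : Subgroup F :=
  Subgroup.closure (x '' {j | (j : ℕ) < i})

/-- `x` is an ordered free basis of `F`. -/
def IsOrderedBasis {n : ℕ} {F : Type*} [Group F] (x : Fin n → F) : Prop :=
  Function.Bijective (FreeGroup.lift x)

/-- `H` is in echelon form with respect to the ordered basis `x`:
`rk (H ⊓ F_i) ≤ rk (H ⊓ F_{i-1}) + 1` for `i = 1, …, n`. -/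
def InEchelonForm {n : ℕ} {F : Type*} [Group F] (x : Fin n → F) (H : Subgroup F) : Prop :=
  ∀ i : ℕ, i < n → rk (H ⊓ stage x (i + 1)) ≤ rk (H ⊓ stage x i) + 1

/-- `H` is an echelon subgroup: it is in echelon form with respect to
some ordered free basis. -/
def IsEchelon {n : ℕ} (H : Subgroup (FreeGroup (Fin n))) : Prop :=
  ∃ x : Fin n → FreeGroup (Fin n), IsOrderedBasis x ∧ InEchelonForm x H

/-- A 1-generator (subgroup) endomorphism: an endomorphism fixing all but (possibly)
one member of some set of free generators. -/
def IsOneGenEndo {G : Type*} [Group G] (φ : G →* G) : Prop :=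
  ∃ (ι : Type) (b : FreeGroupBasis ι G) (s : Set ι),
    s.Subsingleton ∧ ∀ i ∉ s, φ (b i) = b i

/-- The subgroup of points fixed by an endomorphism. -/
def fixedSubgroup {G : Type*} [Group G] (φ : G →* G) : Subgroup G where
  carrier := {g | φ g = g}
  one_mem' := by simp
  mul_mem' := by intro a b ha hb; simp only [Set.mem_setOf_eq, map_mul] at *; rw [ha, hb]
  inv_mem' := by intro a ha; simp only [Set.mem_setOf_eq, map_inv] at *; rw [ha]

/-- An element is primitive if it belongs to some free basis. -/
def IsPrimitive {n : ℕ} (g : FreeGroup (Fin n)) : Prop :=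
  ∃ x : Fin n → FreeGroup (Fin n), IsOrderedBasis x ∧ ∃ j, x j = g

lemma exists_cocycle {ι F Ω K : Type} [Group F] (b : FreeGroupBasis ι F) [MulAction F Ω] [Group K]
    (c : ι → Ω → K) : ∃ d : F → Ω → K,
      (∀ w w' p, d (w * w') p = d w (w' • p) * d w' p) ∧ ∀ j p, d (b j) p = c j p := by
  let Φ : F →* ((Ω → K) ⋊[mulAutArrow] F) :=
    b.lift (fun j => ⟨fun p => c j ((b j)⁻¹ • p), b j⟩)
  have hΦ : ∀ j, Φ (b j) = ⟨fun p => c j ((b j)⁻¹ • p), b j⟩ := fun j => by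
    simp [Φ]
  have hr : ∀ w, (Φ w).right = w := by
    have : SemidirectProduct.rightHom.comp Φ = MonoidHom.id F := by
      apply b.ext_hom
      intro j
      simp [hΦ]
    intro w
    exact DFunLike.congr_fun this w
  refine ⟨fun w p => (Φ w).left (w • p), ?_, ?_⟩
  · intro w w' p
    have : ∀ (f : Ω → K) (q : Ω), (mulAutArrow w f) q = f (w⁻¹ • q) := fun f q => rfl
    simp only [map_mul, SemidirectProduct.mul_left, Pi.mul_apply, hr, this, mul_smul,
      inv_smul_smul]
  · intro j p
    simp [hΦ]

/-- The intersection with a free factor is a retract. -/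
lemma exists_retraction {ι F : Type} [Group F] (b : FreeGroupBasis ι F) (J : Set ι)
    (G A : Subgroup F) (hA : A = Subgroup.closure (b '' J)) :
    ∃ ρ : G →* F, (∀ g, ρ g ∈ G ⊓ A) ∧ ∀ g : G, (g : F) ∈ A → ρ g = g := by
  classical
  let o : F ⧸ G := ((1 : F) : F ⧸ G)
  have hex : ∀ p : F ⧸ G, ∃ a : F, (p = o → a = 1) ∧
      ((∃ a ∈ A, a • o = p) → a ∈ A ∧ a • o = p) := by
    intro p
    by_cases hp : p = o
    · exact ⟨1, fun _ => rfl, fun _ => ⟨A.one_mem, by rw [hp, one_smul]⟩⟩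
    · by_cases h : ∃ a ∈ A, a • o = p
      · obtain ⟨a, h1, h2⟩ := h
        exact ⟨a, fun h => (hp h).elim, fun _ => ⟨h1, h2⟩⟩
      · exact ⟨1, fun h => (hp h).elim, fun h' => (h h').elim⟩
  choose s hs1 hs2 using hex
  let Q : Set (F ⧸ G) := {p | ∃ a ∈ A, a • o = p}
  have hQ : ∀ a ∈ A, ∀ p ∈ Q, a • p ∈ Q := by
    rintro a ha p ⟨a', ha', rfl⟩
    exact ⟨a * a', A.mul_mem ha ha', mul_smul _ _ _⟩
  have hJ : ∀ j ∈ J, b j ∈ A := fun j hj => by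
    rw [hA]; exact Subgroup.subset_closure ⟨j, hj, rfl⟩
  have hoG : ∀ g : F, g • o = o ↔ g ∈ G := by
    intro g
    have : g • o = ((g * 1 : F) : F ⧸ G) := rfl
    rw [this, mul_one, eq_comm]
    simp only [o, QuotientGroup.eq, inv_one, one_mul]
  have hK : ∀ a ∈ A, ∀ p ∈ Q, (s (a • p))⁻¹ * a * s p ∈ G ⊓ A := by
    intro a ha p hp
    obtain ⟨h1, h2⟩ := hs2 p hp
    obtain ⟨h3, h4⟩ := hs2 _ (hQ a ha p hp)
    refine ⟨?_, A.mul_mem (A.mul_mem (A.inv_mem h3) ha) h1⟩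
    change _ ∈ G
    rw [← hoG, mul_smul, mul_smul, h2, inv_smul_eq_iff, h4]
  let c : ι → F ⧸ G → (G ⊓ A : Subgroup F) := fun j p =>
    if h : j ∈ J ∧ p ∈ Q then ⟨_, hK (b j) (hJ j h.1) p h.2⟩ else 1
  obtain ⟨d, hd, hdc⟩ := exists_cocycle b c
  have hd1 : ∀ p, d 1 p = 1 := by
    intro p
    have := hd 1 1 p
    simpa using this
  have h4 : ∀ w ∈ A, ∀ p ∈ Q, (d w p : F) = (s (w • p))⁻¹ * w * s p := by
    intro w hw
    have hw' := hw
    rw [hA] at hw'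
    induction hw' using Subgroup.closure_induction with
    | mem x hx =>
      obtain ⟨j, hj, rfl⟩ := hx
      intro p hp
      rw [hdc]
      simp only [c, dif_pos (And.intro hj hp)]
    | one => intro p _; simp [hd1]
    | mul x y hx hy ihx ihy =>
      rw [← hA] at hx hy
      intro p hp
      rw [hd, Subgroup.coe_mul, ihx hx _ (hQ y hy p hp), ihy hy p hp, mul_smul]
      group
    | inv x hx ih =>
      rw [← hA] at hx
      intro p hp
      have e := hd x x⁻¹ p
      rw [mul_inv_cancel, hd1] at e
      have e2 := congrArg Subtype.val e
      rw [Subgroup.coe_mul, ih hx _ (hQ _ (A.inv_mem hx) p hp), smul_inv_smul] at e2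
      have e3 := eq_inv_of_mul_eq_one_right e2.symm
      rw [e3]
      group
  refine ⟨{ toFun := fun g => (d g o : F), map_one' := by simp [hd1], map_mul' := ?_ }, ?_, ?_⟩
  · intro g h
    simp only [Subgroup.coe_mul, hd]
    rw [(hoG h).2 h.2]
  · intro g
    exact (d g o).2
  · intro g hg
    have ho : o ∈ Q := ⟨1, A.one_mem, one_smul _ _⟩
    change (d g o : F) = g
    rw [h4 g hg o ho, (hoG g).2 g.2, hs1 o rfl]
    simp

/-- Free groups are residually finite. -/
lemma exists_finite_hom {ι F : Type} [Group F] (b : FreeGroupBasis ι F) (g : F) (hg : g ≠ 1) :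
    ∃ (Q : Type) (_ : Group Q) (_ : Finite Q) (f : F →* Q), f g ≠ 1 := by
  classical
  let m : List (ι × Bool) → F := fun l => b.repr.symm (FreeGroup.mk l)
  let L := (b.repr g).toWord
  have hmL : m L = g := by simp [m, L, FreeGroup.mk_toWord]
  let S : Set F := {x | ∃ t, t <:+ L ∧ m t = x}
  have hS : S.Finite := by
    have : S = m '' {t | t ∈ L.tails} := by
      ext x; simp [S, List.mem_tails]
    rw [this]
    exact (List.finite_toSet _).image _
  have hfin : Finite S := hS
  have hperm : ∀ i : ι, ∃ e : Equiv.Perm S, ∀ x y : S, (y : F) = b i * x → e x = y := by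
    intro i
    let f : {x : S // b i * x ∈ S} ↪ S :=
      ⟨fun x => ⟨b i * x.1, x.2⟩, by
        intro x y h
        have := congrArg Subtype.val h
        simp only [mul_right_inj] at this
        exact Subtype.ext (Subtype.ext this)⟩
    let e0 : {x : S // b i * x ∈ S} ≃ {y : S // y ∈ Set.range f} := Equiv.ofInjective f f.injective
    have := Fintype.ofFinite S
    refine ⟨e0.extendSubtype, ?_⟩
    intro x y h
    rw [Equiv.extendSubtype_apply_of_mem e0 x (by rw [← h]; exact y.2)]
    exact Subtype.ext h.symm
  choose e he using hperm
  refine ⟨Equiv.Perm S, inferInstance, inferInstance, b.lift e, ?_⟩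
  have hbe : ∀ i, b.lift e (b i) = e i := fun i => by simp
  have h1 : (1 : F) ∈ S := ⟨[], List.nil_suffix, by simp [m, ← FreeGroup.one_eq_mk]⟩
  have key : ∀ t (ht : t <:+ L), b.lift e (m t) ⟨1, h1⟩ = ⟨m t, t, ht, rfl⟩ := by
    intro t
    induction t with
    | nil => intro _; apply Subtype.ext; simp [m, ← FreeGroup.one_eq_mk]
    | cons a t ih =>
      intro ht
      have ht' : t <:+ L := (List.suffix_cons a t).trans ht
      obtain ⟨i, β⟩ := a
      have hbi : b.repr.symm (FreeGroup.of i) = b i := rfl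
      cases β with
      | true =>
        have hm : m ((i, true) :: t) = b i * m t := by
          simp only [m, ← hbi, ← map_mul]; rfl
        have : b.lift e (m ((i, true) :: t)) ⟨1, h1⟩ = e i ⟨m t, t, ht', rfl⟩ := by
          rw [hm, map_mul, Equiv.Perm.mul_apply, ih ht', hbe]
        rw [this]
        exact he i _ _ hm
      | false =>
        have hm : m ((i, false) :: t) = (b i)⁻¹ * m t := by
          simp only [m, ← hbi, ← map_mul, ← map_inv]; rfl
        have : b.lift e (m ((i, false) :: t)) ⟨1, h1⟩ = (e i)⁻¹ ⟨m t, t, ht', rfl⟩ := by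
          rw [hm, map_mul, map_inv, Equiv.Perm.mul_apply, ih ht', hbe]
        rw [this, Equiv.Perm.inv_eq_iff_eq]
        symm
        apply he i
        simp only [hm, mul_inv_cancel_left]
  intro h
  have h2 := congrArg Subtype.val (key L (List.suffix_refl _))
  simp only [hmL, h, Equiv.Perm.one_apply] at h2
  exact hg h2.symm

lemma rk_le {G : Type*} [Group G] (H : Subgroup G) (S : Set G) (h : Subgroup.closure S = H) :
    rk H ≤ Cardinal.mk S :=
  ciInf_le' (fun S : {S : Set G // Subgroup.closure S = H} => Cardinal.mk S.1) ⟨S, h⟩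

lemma rk_exists {G : Type*} [Group G] (H : Subgroup G) :
    ∃ S : Set G, Subgroup.closure S = H ∧ Cardinal.mk S = rk H := by
  have : Nonempty {S : Set G // Subgroup.closure S = H} := ⟨⟨H, Subgroup.closure_eq H⟩⟩
  obtain ⟨S, hS⟩ := ciInf_mem (fun S : {S : Set G // Subgroup.closure S = H} => Cardinal.mk S.1)
  exact ⟨S.1, S.2, hS⟩

lemma rk_le_basis {ι F : Type} [Group F] (K : Subgroup F) (β : FreeGroupBasis ι K) :
    rk K ≤ Cardinal.mk ι := by
  refine (rk_le K (Set.range (fun i => (β i : F))) ?_).trans Cardinal.mk_range_le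
  have h : Subgroup.closure (Set.range β) = ⊤ := by
    have : (β : ι → K) = β.repr.symm ∘ FreeGroup.of := by ext i; rfl
    rw [this, Set.range_comp]
    have h2 := MonoidHom.map_closure (β.repr.symm.toMonoidHom) (Set.range FreeGroup.of)
    rw [FreeGroup.closure_range_of, ← MonoidHom.range_eq_map] at h2
    have h3 : β.repr.symm.toMonoidHom.range = ⊤ :=
      MonoidHom.range_eq_top.2 β.repr.symm.surjective
    rw [h3] at h2
    exact h2.symm
  have := MonoidHom.map_closure K.subtype (Set.range β)
  rw [h, ← MonoidHom.range_eq_map, Subgroup.range_subtype, ← Set.range_comp] at this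
  exact this.symm

lemma rk_add_one_le {ι F : Type} [Group F] [Countable F] (b : FreeGroupBasis ι F) (J : Set ι)
    (G A : Subgroup F) (hA : A = Subgroup.closure (b '' J)) (hGA : ¬ G ≤ A) :
    rk (G ⊓ A) + 1 ≤ rk G := by
  classical
  obtain ⟨S, hS, hSr⟩ := rk_exists G
  rw [← hSr]
  rcases le_or_gt Cardinal.aleph0 (Cardinal.mk S) with hinf | hfin
  · refine le_trans ?_ hinf
    have : rk (G ⊓ A) ≤ Cardinal.aleph0 :=
      (rk_le _ _ (Subgroup.closure_eq _)).trans (Cardinal.mk_le_aleph0)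
    calc rk (G ⊓ A) + 1 ≤ Cardinal.aleph0 + 1 := by gcongr
      _ = Cardinal.aleph0 := by simp
  have hSfin : Finite S := Cardinal.lt_aleph0_iff_finite.1 hfin
  by_contra hlt
  have hle : Cardinal.mk S ≤ rk (G ⊓ A) := by
    by_contra h
    rw [not_le] at h
    exact hlt ((Cardinal.add_one_le_succ _).trans (Order.succ_le_of_lt h))
  obtain ⟨ρ, hρ1, hρ2⟩ := exists_retraction b J G A hA
  have : IsFreeGroup F := b.isFreeGroup
  let β := IsFreeGroup.basis (G ⊓ A : Subgroup F)
  have hemb := hle.trans (rk_le_basis _ β)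
  obtain ⟨j⟩ := hemb
  let ρ' : G →* (G ⊓ A : Subgroup F) := ρ.codRestrict _ hρ1
  have hρ'surj : Function.Surjective ρ' := by
    intro k
    refine ⟨⟨k, k.2.1⟩, Subtype.ext ?_⟩
    exact hρ2 ⟨k, k.2.1⟩ k.2.2
  have hSG : ∀ x : S, (x : F) ∈ G := fun x => by
    rw [← hS]; exact Subgroup.subset_closure x.2
  apply hGA
  intro g hg
  -- the retraction is injective
  have hinj : ∀ x : G, ρ x = 1 → (x : F) = 1 := by
    intro x hx
    by_contra hx1
    obtain ⟨Q, _, _, f, hf⟩ := exists_finite_hom b (x : F) hx1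
    have hx' : ρ' x = 1 := Subtype.ext hx
    have hdet : ∀ u v : G →* Q, (∀ y : S, u ⟨y, hSG y⟩ = v ⟨y, hSG y⟩) → u = v := by
      intro u v huv
      ext ⟨z, hz⟩
      have hz' := hz
      rw [← hS] at hz'
      induction hz' using Subgroup.closure_induction with
      | mem y hy => exact huv ⟨y, hy⟩
      | one => exact (map_one u).trans (map_one v).symm
      | mul y w hy hw ihy ihw =>
        rw [hS] at hy hw
        have e : (⟨y * w, hz⟩ : G) = ⟨y, hy⟩ * ⟨w, hw⟩ := rfl
        rw [e, map_mul, map_mul, ihy, ihw]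
      | inv y hy ih =>
        rw [hS] at hy
        have e : (⟨y⁻¹, hz⟩ : G) = ⟨y, hy⟩⁻¹ := rfl
        rw [e, map_inv, map_inv, ih]
    let T : (_ → Q) → (S → Q) := fun q y => β.lift q (ρ' ⟨y, hSG y⟩)
    have hT : Function.Injective T := by
      intro q q' h
      have h1 : (β.lift q).comp ρ' = (β.lift q').comp ρ' :=
        hdet _ _ (fun y => congrFun h y)
      apply β.lift.injective
      ext k
      obtain ⟨z, rfl⟩ := hρ'surj k
      exact DFunLike.congr_fun h1 z
    let R : (S → Q) → (_ → Q) := fun q => Function.extend j q 1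
    have hR : Function.Injective R := by
      intro q q' h
      ext y
      have := congrFun h (j y)
      simpa only [R, j.injective.extend_apply] using this
    have hTR : Function.Surjective (T ∘ R) :=
      Finite.surjective_of_injective (hT.comp hR)
    obtain ⟨q, hq⟩ := hTR (fun y => f y)
    have h2 : (β.lift (R q)).comp ρ' = f.comp G.subtype :=
      hdet _ _ (fun y => congrFun hq y)
    have h3 := DFunLike.congr_fun h2 x
    simp only [MonoidHom.comp_apply, hx', map_one] at h3
    exact hf h3.symm
  have hgm := hρ1 ⟨g, hg⟩
  have h5 := hinj (⟨g, hg⟩ * ⟨ρ ⟨g, hg⟩, hgm.1⟩⁻¹) (by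
    rw [map_mul, map_inv, hρ2 ⟨ρ ⟨g, hg⟩, hgm.1⟩ hgm.2]
    simp)
  have h6 : g = ρ ⟨g, hg⟩ := mul_inv_eq_one.1 h5
  rw [h6]
  exact hgm.2

/-- Echelon subgroups of free groups are compressed. -/
theorem echelon_compressed (n : ℕ) (H G : Subgroup (FreeGroup (Fin n)))
    (hH : IsEchelon H) (hHG : H ≤ G) : rk H ≤ rk G := by
  obtain ⟨x, hx, hE⟩ := hH
  let b : FreeGroupBasis (Fin n) (FreeGroup (Fin n)) :=
    FreeGroupBasis.ofRepr (MulEquiv.ofBijective (FreeGroup.lift x) hx).symm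
  have hb : ∀ j, b j = x j := by
    intro j
    change FreeGroup.lift x (FreeGroup.of j) = x j
    simp
  have hbx : (b : Fin n → FreeGroup (Fin n)) = x := funext hb
  have : Countable (FreeGroup (Fin n)) := by
    unfold FreeGroup
    exact Quot.mk_surjective.countable
  have key : ∀ i, i ≤ n → rk (H ⊓ stage x i) ≤ rk (G ⊓ stage x i) := by
    intro i
    induction i with
    | zero =>
      intro _
      simp [stage]
    | succ i ih =>
      intro hi
      have ih' := ih (by omega)
      have hmono : stage x i ≤ stage x (i + 1) :=
        Subgroup.closure_mono (Set.image_mono (fun j (hj : (j : ℕ) < i) => Nat.lt_succ_of_lt hj))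
      have hG : G ⊓ stage x (i + 1) ⊓ stage x i = G ⊓ stage x i := by
        rw [inf_assoc, inf_eq_right.2 hmono]
      by_cases h : G ⊓ stage x (i + 1) ≤ stage x i
      · have h1 : G ⊓ stage x (i + 1) = G ⊓ stage x i := by
          rw [← hG, inf_eq_left.2 h]
        have h2 : H ⊓ stage x (i + 1) = H ⊓ stage x i := by
          apply le_antisymm
          · exact le_inf inf_le_left ((inf_le_inf_right _ hHG).trans h)
          · exact inf_le_inf_left _ hmono
        rw [h1, h2]
        exact ih'
      · have h3 := rk_add_one_le b {j | (j : ℕ) < i} (G ⊓ stage x (i + 1)) (stage x i)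
          (by rw [hbx]; rfl) h
        rw [hG] at h3
        calc _ ≤ _ := hE i (by omega)
          _ ≤ rk (G ⊓ stage x i) + 1 := by gcongr
          _ ≤ _ := h3
  have htop : stage x n = ⊤ := by
    have h1 := MonoidHom.map_closure (FreeGroup.lift x) (Set.range FreeGroup.of)
    rw [FreeGroup.closure_range_of, ← MonoidHom.range_eq_map,
      MonoidHom.range_eq_top.2 hx.2, ← Set.range_comp] at h1
    rw [h1, stage]
    congr 1
    ext y
    simp
  have := key n le_rfl
  rwa [htop, inf_top_eq, inf_top_eq] at this
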